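/- arXiv:1707.05389 — 2 statements merged into one kernel-verified Lean document; each statement's English description precedes it below -/
import Mathlib

section
/- Let h : ℝ² → ℝ be any smooth function. Let u : ℝ² → ℝ be a smooth function of (t,x), set m = u − u_xx, and suppose that at every point m_t + 2 u_x h(u,u_x) m + u ∂_x( h(u,u_x) m ) = 0 (equivalently, m_t + u_x h(u,u_x) m + ∂_x( u h(u,u_x) m ) = 0). Then at every point ∂_t( u² + u_x² ) + ∂_x( 2 u² h(u,u_x) m − 2 u u_tx ) = 0; that is, the H¹ density u² + u_x² satisfies a local conservation law for this whole family of equations. -/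
open Real

noncomputable section

/-- Partial derivative in the first (time) variable. -/
def pt (f : ℝ → ℝ → ℝ) (t x : ℝ) : ℝ := deriv (fun s => f s x) t

/-- Partial derivative in the second (space) variable. -/
def px (f : ℝ → ℝ → ℝ) (t x : ℝ) : ℝ := deriv (fun y => f t y) x

/-- The momentum variable `m = u - u_xx`. -/
def mf (u : ℝ → ℝ → ℝ) (t x : ℝ) : ℝ := u t x - px (px u) t x

open scoped ContDiff Topology

section PartialDerivatives

variable {f : ℝ → ℝ → ℝ} {t x : ℝ}

theorem hasDerivAt_time_slice (hf : DifferentiableAt ℝ (Function.uncurry f) (t, x)) :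
    HasDerivAt (fun s => f s x) (fderiv ℝ (Function.uncurry f) (t, x) (1, 0)) t := by
  have hline : HasDerivAt (fun s => (s, x)) ((1 : ℝ), (0 : ℝ)) t :=
    (hasDerivAt_id t).prodMk (hasDerivAt_const t x)
  exact hf.hasFDerivAt.comp_hasDerivAt t hline

theorem hasDerivAt_space_slice (hf : DifferentiableAt ℝ (Function.uncurry f) (t, x)) :
    HasDerivAt (fun y => f t y) (fderiv ℝ (Function.uncurry f) (t, x) (0, 1)) x := by
  have hline : HasDerivAt (fun y => (t, y)) ((0 : ℝ), (1 : ℝ)) x :=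
    (hasDerivAt_const x t).prodMk (hasDerivAt_id x)
  exact hf.hasFDerivAt.comp_hasDerivAt x hline

theorem hasDerivAt_pt (hf : DifferentiableAt ℝ (Function.uncurry f) (t, x)) :
    HasDerivAt (fun s => f s x) (pt f t x) t :=
  (hasDerivAt_time_slice hf).differentiableAt.hasDerivAt

theorem hasDerivAt_px (hf : DifferentiableAt ℝ (Function.uncurry f) (t, x)) :
    HasDerivAt (fun y => f t y) (px f t x) x :=
  (hasDerivAt_space_slice hf).differentiableAt.hasDerivAt

theorem pt_eq_fderiv (hf : DifferentiableAt ℝ (Function.uncurry f) (t, x)) :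
    pt f t x = fderiv ℝ (Function.uncurry f) (t, x) (1, 0) :=
  (hasDerivAt_time_slice hf).deriv

theorem px_eq_fderiv (hf : DifferentiableAt ℝ (Function.uncurry f) (t, x)) :
    px f t x = fderiv ℝ (Function.uncurry f) (t, x) (0, 1) :=
  (hasDerivAt_space_slice hf).deriv

variable {p : ℝ × ℝ} {m n : ℕ∞ω}

theorem uncurry_pt_eventuallyEq_fderiv (hf : ContDiffAt ℝ 1 (Function.uncurry f) p) :
    Function.uncurry (pt f) =ᶠ[𝓝 p] fun q => fderiv ℝ (Function.uncurry f) q (1, 0) :=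
  (hf.eventually (by simp)).mono fun _ hq => pt_eq_fderiv (hq.differentiableAt one_ne_zero)

theorem uncurry_px_eventuallyEq_fderiv (hf : ContDiffAt ℝ 1 (Function.uncurry f) p) :
    Function.uncurry (px f) =ᶠ[𝓝 p] fun q => fderiv ℝ (Function.uncurry f) q (0, 1) :=
  (hf.eventually (by simp)).mono fun _ hq => px_eq_fderiv (hq.differentiableAt one_ne_zero)

theorem contDiffAt_pt (hf : ContDiffAt ℝ n (Function.uncurry f) p) (hmn : m + 1 ≤ n) :
    ContDiffAt ℝ m (Function.uncurry (pt f)) p :=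
  ((hf.fderiv_right hmn).clm_apply contDiffAt_const).congr_of_eventuallyEq <|
    uncurry_pt_eventuallyEq_fderiv (hf.of_le (le_add_self.trans hmn))

theorem contDiffAt_px (hf : ContDiffAt ℝ n (Function.uncurry f) p) (hmn : m + 1 ≤ n) :
    ContDiffAt ℝ m (Function.uncurry (px f)) p :=
  ((hf.fderiv_right hmn).clm_apply contDiffAt_const).congr_of_eventuallyEq <|
    uncurry_px_eventuallyEq_fderiv (hf.of_le (le_add_self.trans hmn))

theorem px_pt_comm (hf : ContDiffAt ℝ 2 (Function.uncurry f) (t, x)) :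
    px (pt f) t x = pt (px f) t x := by
  have hf₁ : ContDiffAt ℝ 1 (Function.uncurry f) (t, x) := hf.of_le one_le_two
  have hfderiv : DifferentiableAt ℝ (fderiv ℝ (Function.uncurry f)) (t, x) :=
    (hf.fderiv_right (m := 1) (by norm_num)).differentiableAt one_ne_zero
  have hpt : DifferentiableAt ℝ (Function.uncurry (pt f)) (t, x) :=
    (contDiffAt_pt (m := 1) hf (by norm_num)).differentiableAt one_ne_zero
  have hpx : DifferentiableAt ℝ (Function.uncurry (px f)) (t, x) :=
    (contDiffAt_px (m := 1) hf (by norm_num)).differentiableAt one_ne_zero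
  have hsymm : IsSymmSndFDerivAt ℝ (Function.uncurry f) (t, x) :=
    hf.isSymmSndFDerivAt (by simp)
  rw [px_eq_fderiv hpt, pt_eq_fderiv hpx, (uncurry_pt_eventuallyEq_fderiv hf₁).fderiv_eq,
    (uncurry_px_eventuallyEq_fderiv hf₁).fderiv_eq,
    fderiv_clm_apply hfderiv (differentiableAt_const _),
    fderiv_clm_apply hfderiv (differentiableAt_const _)]
  simpa using hsymm.eq (0, 1) (1, 0)

end PartialDerivatives

/-- The `H¹` energy density `u² + u_x²`. -/
def h1Density (u : ℝ → ℝ → ℝ) (t x : ℝ) : ℝ := (u t x) ^ 2 + (px u t x) ^ 2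

/-- The flux `2u²φm - 2u u_tx` of the `H¹` energy for the equation
`m_t + 2 u_x φ m + u ∂_x(φ m) = 0`. The coefficient `φ` is an arbitrary function of `(t, x)`; the
multi-peakon family has `φ = h(u, u_x)`. -/
def h1Flux (u φ : ℝ → ℝ → ℝ) (t x : ℝ) : ℝ :=
  2 * (u t x) ^ 2 * φ t x * mf u t x - 2 * u t x * pt (px u) t x

section Energy

variable {u φ : ℝ → ℝ → ℝ} {t x : ℝ}

theorem contDiffAt_mf {m n : ℕ∞ω} {p : ℝ × ℝ} (hu : ContDiffAt ℝ n (Function.uncurry u) p)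
    (hmn : m + 2 ≤ n) : ContDiffAt ℝ m (Function.uncurry (mf u)) p := by
  have hmn' : m + 1 + 1 ≤ n := by rwa [add_assoc, one_add_one_eq_two]
  exact (hu.of_le (le_self_add.trans hmn)).sub (contDiffAt_px (contDiffAt_px hu hmn') le_rfl)

theorem differentiableAt_comp_mul_mf {h : ℝ → ℝ → ℝ}
    (hh : DifferentiableAt ℝ (Function.uncurry h) (u t x, px u t x))
    (hu : ContDiffAt ℝ 3 (Function.uncurry u) (t, x)) :
    DifferentiableAt ℝ (fun y => h (u t y) (px u t y) * mf u t y) x := by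
  have hux : ContDiffAt ℝ 2 (Function.uncurry (px u)) (t, x) := contDiffAt_px hu (by norm_num)
  have hm : ContDiffAt ℝ 1 (Function.uncurry (mf u)) (t, x) := contDiffAt_mf hu (by norm_num)
  have hu_slice := (hasDerivAt_px (hu.differentiableAt three_ne_zero)).differentiableAt
  have hux_slice := (hasDerivAt_px (hux.differentiableAt two_ne_zero)).differentiableAt
  have hm_slice := (hasDerivAt_px (hm.differentiableAt one_ne_zero)).differentiableAt
  exact (hh.comp x (hu_slice.prodMk hux_slice)).mul hm_slice

theorem pt_mf (hu : DifferentiableAt ℝ (Function.uncurry u) (t, x))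
    (huxx : DifferentiableAt ℝ (Function.uncurry (px (px u))) (t, x)) :
    pt (mf u) t x = pt u t x - pt (px (px u)) t x :=
  ((hasDerivAt_pt hu).sub (hasDerivAt_pt huxx)).deriv

theorem pt_h1Density (hu : DifferentiableAt ℝ (Function.uncurry u) (t, x))
    (hux : DifferentiableAt ℝ (Function.uncurry (px u)) (t, x)) :
    pt (h1Density u) t x = 2 * u t x * pt u t x + 2 * px u t x * pt (px u) t x := by
  have hderiv := ((hasDerivAt_pt hu).fun_pow 2).fun_add ((hasDerivAt_pt hux).fun_pow 2)
  exact hderiv.deriv.trans (by norm_num)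

theorem px_h1Flux (hu : DifferentiableAt ℝ (Function.uncurry u) (t, x))
    (hutx : DifferentiableAt ℝ (Function.uncurry (pt (px u))) (t, x))
    (hφm : DifferentiableAt ℝ (fun y => φ t y * mf u t y) x) :
    px (h1Flux u φ) t x =
      4 * u t x * px u t x * (φ t x * mf u t x)
        + 2 * (u t x) ^ 2 * px (fun t' x' => φ t' x' * mf u t' x') t x
        - 2 * (px u t x * pt (px u) t x + u t x * px (pt (px u)) t x) := by
  have hux := hasDerivAt_px hu
  have hderiv := (((hux.fun_pow 2).const_mul 2).fun_mul hφm.hasDerivAt).fun_sub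
    ((hux.const_mul 2).fun_mul (hasDerivAt_px hutx))
  have hflux : h1Flux u φ t = fun y =>
      2 * (u t y) ^ 2 * (φ t y * mf u t y) - 2 * u t y * pt (px u) t y := by
    funext y
    simp only [h1Flux, mul_assoc]
  rw [← hflux] at hderiv
  refine hderiv.deriv.trans ?_
  simp only [px, Nat.cast_ofNat]
  ring

-- `2u` is the characteristic (multiplier) of the conservation law.
theorem pt_h1Density_add_px_h1Flux (hu : ContDiffAt ℝ 3 (Function.uncurry u) (t, x))
    (hφm : DifferentiableAt ℝ (fun y => φ t y * mf u t y) x) :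
    pt (h1Density u) t x + px (h1Flux u φ) t x =
      2 * u t x * (pt (mf u) t x + 2 * px u t x * φ t x * mf u t x
        + u t x * px (fun t' x' => φ t' x' * mf u t' x') t x) := by
  have hux : ContDiffAt ℝ 2 (Function.uncurry (px u)) (t, x) := contDiffAt_px hu (by norm_num)
  have huxx : ContDiffAt ℝ 1 (Function.uncurry (px (px u))) (t, x) :=
    contDiffAt_px hux (by norm_num)
  have hutx : ContDiffAt ℝ 1 (Function.uncurry (pt (px u))) (t, x) :=
    contDiffAt_pt hux (by norm_num)
  have hu' := hu.differentiableAt three_ne_zero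
  rw [pt_h1Density hu' (hux.differentiableAt two_ne_zero),
    px_h1Flux hu' (hutx.differentiableAt one_ne_zero) hφm,
    pt_mf hu' (huxx.differentiableAt one_ne_zero), px_pt_comm hux]
  ring

theorem H1_conservation_family_general (hu : ContDiffAt ℝ 3 (Function.uncurry u) (t, x))
    (hφm : DifferentiableAt ℝ (fun y => φ t y * mf u t y) x)
    (heq : pt (mf u) t x + 2 * px u t x * φ t x * mf u t x
      + u t x * px (fun t' x' => φ t' x' * mf u t' x') t x = 0) :
    pt (h1Density u) t x + px (h1Flux u φ) t x = 0 := by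
  rw [pt_h1Density_add_px_h1Flux hu hφm, heq, mul_zero]

end Energy

/-- the H¹ density is conserved for the family
`m_t + 2 u_x h(u,u_x) m + u ∂_x(h(u,u_x) m) = 0`. -/
theorem H1_conservation_family
    (h : ℝ → ℝ → ℝ) (hh : ContDiff ℝ (⊤ : ℕ∞) (Function.uncurry h))
    (u : ℝ → ℝ → ℝ) (hu : ContDiff ℝ (⊤ : ℕ∞) (Function.uncurry u))
    (heq : ∀ t x : ℝ,
      pt (mf u) t x
        + 2 * px u t x * h (u t x) (px u t x) * mf u t x
        + u t x * px (fun t' x' => h (u t' x') (px u t' x') * mf u t' x') t x = 0) :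
    ∀ t x : ℝ,
      pt (fun t' x' => (u t' x')^2 + (px u t' x')^2) t x
        + px (fun t' x' =>
            2 * (u t' x')^2 * h (u t' x') (px u t' x') * mf u t' x'
              - 2 * u t' x' * pt (px u) t' x') t x = 0 := by
  intro t x
  have hu₃ : ContDiffAt ℝ 3 (Function.uncurry u) (t, x) :=
    hu.contDiffAt.of_le (by norm_cast)
  have h_diff : Differentiable ℝ (Function.uncurry h) := hh.differentiable (by simp)
  exact H1_conservation_family_general hu₃ (differentiableAt_comp_mul_mf (h_diff _) hu₃) (heq t x)

end
end

section
/- Let f1, g1 : ℝ → ℝ be smooth, let F1(y) = ∫_0^y f1(s) ds and G1(y) = ∫_0^y g1(s) ds, and let c ∈ ℝ. Assume that for every real a ≠ 0, a F1(a²) + G1(a²) ≠ c a². If U : ℝ → ℝ is a smooth function satisfying, for all ξ ∈ ℝ, the travelling-wave ODE −c( U' − U''' ) + U' (U − U'') f1(U² − U'²) + d/dξ[ (U − U'')( U f1(U² − U'²) + g1(U² − U'²) ) ] = 0, and U(ξ), U'(ξ), U''(ξ) → 0 as ξ → ±∞, then U is identically zero; that is, the Hamiltonian multi-peakon family admits no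 nontrivial smooth solitary travelling wave with such a speed c. -/
open Real Filter

open scoped Topology

/-!
Write `W = U² - U'²` and `m = U - U''`. Since `W' = 2 U' m`, the wave equation says that
`P = F(W) / 2 + m (U f(W) + g(W) - c)` is constant, where `F' = f`, `G' = g`, `F(0) = G(0) = 0`.
Moreover `E = U F(W) + G(W) - c W` satisfies `E' = 2 U' P` whatever `U` is. Decay forces `P = 0`,
hence `E` is constant, and decay forces `E = 0`. At a nonzero extremum `a = U(ξ)` one has
`W(ξ) = a²`, and `E(ξ) = 0` becomes the excluded relation `a F(a²) + G(a²) = c a²`.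
-/

section Calculus

theorem exists_ne_zero_isLocalExtr_of_tendsto_cocompact {X : Type*} [TopologicalSpace X]
    {u : X → ℝ} (hu : Continuous u) (hlim : Tendsto u (cocompact X) (𝓝 0)) {x₀ : X}
    (hx₀ : u x₀ ≠ 0) : ∃ x, u x ≠ 0 ∧ IsLocalExtr u x := by
  rcases hx₀.lt_or_gt with hneg | hpos
  · obtain ⟨x, hx⟩ := hu.exists_forall_le' x₀ (hlim.eventually_const_le hneg)
    exact ⟨x, ((hx x₀).trans_lt hneg).ne, .inl (.of_forall hx)⟩
  · obtain ⟨x, hx⟩ := hu.exists_forall_ge' x₀ (hlim.eventually_le_const hpos)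
    exact ⟨x, (hpos.trans_le (hx x₀)).ne', .inr (.of_forall hx)⟩

theorem eq_of_hasDerivAt_zero_of_tendsto {𝕜 E : Type*} [RCLike 𝕜] [NormedAddCommGroup E]
    [NormedSpace 𝕜 E] {f : 𝕜 → E} {l : Filter 𝕜} [l.NeBot] {b : E}
    (hf : ∀ x, HasDerivAt f 0 x) (hlim : Tendsto f l (𝓝 b)) (x : 𝕜) : f x = b := by
  have hconst : f = fun _ ↦ f x := funext fun y ↦
    is_const_of_deriv_eq_zero (fun z ↦ (hf z).differentiableAt) (fun z ↦ (hf z).deriv) y x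
  rw [hconst] at hlim
  exact tendsto_nhds_unique tendsto_const_nhds hlim

theorem mapClusterPt_deriv_zero_of_tendsto_atTop {f : ℝ → ℝ} {b : ℝ} (hf : Differentiable ℝ f)
    (hlim : Tendsto f atTop (𝓝 b)) : MapClusterPt 0 atTop (deriv f) := by
  have mean_value (n : ℕ) : ∃ ξ ∈ Set.Ioo (n : ℝ) (n + 1), deriv f ξ = f (n + 1) - f n := by
    simpa using exists_deriv_eq_slope f (lt_add_one (n : ℝ)) hf.continuous.continuousOn
      hf.differentiableOn
  choose ξ hξ hslope using mean_value
  have hn : Tendsto (fun n : ℕ ↦ (n : ℝ)) atTop atTop := tendsto_natCast_atTop_atTop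
  have hξ_atTop : Tendsto ξ atTop atTop := tendsto_atTop_mono (fun n ↦ (hξ n).1.le) hn
  have hderiv : Tendsto (deriv f ∘ ξ) atTop (𝓝 0) := by
    simpa [Function.comp_def, hslope] using
      (hlim.comp (tendsto_atTop_add_const_right _ 1 hn)).sub (hlim.comp hn)
  exact hderiv.mapClusterPt.of_comp hξ_atTop

end Calculus

/-- The momentum density `m = U - U''` of a profile `U`. -/
noncomputable def momentum (U : ℝ → ℝ) (ξ : ℝ) : ℝ :=
  U ξ - deriv (deriv U) ξ

/-- The quantity `W = U² - U'²` on which the nonlinearities of the family depend. -/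
noncomputable def sqSubDerivSq (U : ℝ → ℝ) (ξ : ℝ) : ℝ :=
  U ξ ^ 2 - deriv U ξ ^ 2

/-- The flux `m (U f(W) + g(W) - c)` of the momentum density in the frame moving with speed `c`. -/
noncomputable def momentumFlux (f g : ℝ → ℝ) (c : ℝ) (U : ℝ → ℝ) (ξ : ℝ) : ℝ :=
  momentum U ξ * (U ξ * f (sqSubDerivSq U ξ) + g (sqSubDerivSq U ξ) - c)

/-- `U` is the profile of a wave of speed `c` for the nonlinearities `f` and `g`. The equation is
kept in the form of a balance law for the flux, so that it makes sense for continuous `f`, `g` and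
twice differentiable `U`. -/
def IsTravellingWave (f g : ℝ → ℝ) (c : ℝ) (U : ℝ → ℝ) : Prop :=
  ∀ ξ, HasDerivAt (momentumFlux f g c U) (-(deriv U ξ * momentum U ξ * f (sqSubDerivSq U ξ))) ξ

/-- The first integral `P = F(W) / 2 + m (U f(W) + g(W) - c)` of the wave equation, where `F` is
the primitive of `f` vanishing at `0`. -/
noncomputable def momentumIntegral (f g : ℝ → ℝ) (c : ℝ) (U : ℝ → ℝ) (ξ : ℝ) : ℝ :=
  (∫ s in (0 : ℝ)..sqSubDerivSq U ξ, f s) / 2 + momentumFlux f g c U ξ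

/-- The quantity `E = U F(W) + G(W) - c W`, where `F` and `G` are the primitives of `f` and `g`
vanishing at `0`. It is a first integral for the waves on which `momentumIntegral` vanishes. -/
noncomputable def energyIntegral (f g : ℝ → ℝ) (c : ℝ) (U : ℝ → ℝ) (ξ : ℝ) : ℝ :=
  U ξ * (∫ s in (0 : ℝ)..sqSubDerivSq U ξ, f s) + (∫ s in (0 : ℝ)..sqSubDerivSq U ξ, g s)
    - c * sqSubDerivSq U ξ

section FirstIntegrals

variable {f g U : ℝ → ℝ} {c ξ : ℝ} {l : Filter ℝ}

theorem isTravellingWave_of_ode (hf : Differentiable ℝ f) (hg : Differentiable ℝ g)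
    (hU : Differentiable ℝ U) (hU' : Differentiable ℝ (deriv U))
    (hU'' : Differentiable ℝ (deriv (deriv U)))
    (hode : ∀ ξ : ℝ,
      -c * (deriv U ξ - deriv (deriv (deriv U)) ξ)
        + deriv U ξ * (U ξ - deriv (deriv U) ξ) * f (U ξ ^ 2 - deriv U ξ ^ 2)
        + deriv (fun s ↦ (U s - deriv (deriv U) s)
            * (U s * f (U s ^ 2 - deriv U s ^ 2) + g (U s ^ 2 - deriv U s ^ 2))) ξ = 0) :
    IsTravellingWave f g c U := by
  intro ξ
  have hm : HasDerivAt (momentum U) (deriv U ξ - deriv (deriv (deriv U)) ξ) ξ :=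
    (hU ξ).hasDerivAt.sub (hU'' ξ).hasDerivAt
  have hnonlinear : DifferentiableAt ℝ (fun s ↦ (U s - deriv (deriv U) s)
      * (U s * f (U s ^ 2 - deriv U s ^ 2) + g (U s ^ 2 - deriv U s ^ 2))) ξ := by
    fun_prop
  have hflux : momentumFlux f g c U = fun s ↦ -c * momentum U s
      + (U s - deriv (deriv U) s)
        * (U s * f (U s ^ 2 - deriv U s ^ 2) + g (U s ^ 2 - deriv U s ^ 2)) := by
    funext s
    simp only [momentumFlux, momentum, sqSubDerivSq]
    ring
  rw [hflux]
  refine ((hm.const_mul (-c)).add hnonlinear.hasDerivAt).congr_deriv ?_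
  simp only [momentum, sqSubDerivSq]
  linear_combination hode ξ

theorem hasDerivAt_sqSubDerivSq (hU : DifferentiableAt ℝ U ξ)
    (hU' : DifferentiableAt ℝ (deriv U) ξ) :
    HasDerivAt (sqSubDerivSq U) (2 * deriv U ξ * momentum U ξ) ξ := by
  refine ((hU.hasDerivAt.pow 2).sub (hU'.hasDerivAt.pow 2)).congr_deriv ?_
  simp only [momentum]
  push_cast
  ring

theorem hasDerivAt_integral_sqSubDerivSq (hf : Continuous f) (hU : DifferentiableAt ℝ U ξ)
    (hU' : DifferentiableAt ℝ (deriv U) ξ) :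
    HasDerivAt (fun s ↦ ∫ t in (0 : ℝ)..sqSubDerivSq U s, f t)
      (f (sqSubDerivSq U ξ) * (2 * deriv U ξ * momentum U ξ)) ξ :=
  (hf.integral_hasStrictDerivAt 0 (sqSubDerivSq U ξ)).hasDerivAt.comp ξ
    (hasDerivAt_sqSubDerivSq hU hU')

theorem IsTravellingWave.hasDerivAt_momentumIntegral (hwave : IsTravellingWave f g c U)
    (hf : Continuous f) (hU : DifferentiableAt ℝ U ξ) (hU' : DifferentiableAt ℝ (deriv U) ξ) :
    HasDerivAt (momentumIntegral f g c U) 0 ξ := by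
  refine (((hasDerivAt_integral_sqSubDerivSq hf hU hU').div_const 2).add
    (hwave ξ)).congr_deriv ?_
  ring

theorem hasDerivAt_energyIntegral (hf : Continuous f) (hg : Continuous g)
    (hU : DifferentiableAt ℝ U ξ) (hU' : DifferentiableAt ℝ (deriv U) ξ) :
    HasDerivAt (energyIntegral f g c U) (2 * deriv U ξ * momentumIntegral f g c U ξ) ξ := by
  refine (((hU.hasDerivAt.mul (hasDerivAt_integral_sqSubDerivSq hf hU hU')).add
    (hasDerivAt_integral_sqSubDerivSq hg hU hU')).sub
    ((hasDerivAt_sqSubDerivSq hU hU').const_mul c)).congr_deriv ?_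
  simp only [momentumIntegral, momentumFlux]
  ring

theorem tendsto_sqSubDerivSq_zero (hU : Tendsto U l (𝓝 0)) (hU' : Tendsto (deriv U) l (𝓝 0)) :
    Tendsto (sqSubDerivSq U) l (𝓝 0) := by
  have hlim : Tendsto (sqSubDerivSq U) l (𝓝 (0 ^ 2 - 0 ^ 2)) := (hU.pow 2).sub (hU'.pow 2)
  simpa using hlim

theorem tendsto_integral_sqSubDerivSq_zero (hf : Continuous f) (hU : Tendsto U l (𝓝 0))
    (hU' : Tendsto (deriv U) l (𝓝 0)) :
    Tendsto (fun ξ ↦ ∫ s in (0 : ℝ)..sqSubDerivSq U ξ, f s) l (𝓝 0) := by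
  have hF : Tendsto (fun y ↦ ∫ s in (0 : ℝ)..y, f s) (𝓝 0) (𝓝 0) := by
    simpa using (hf.integral_hasStrictDerivAt 0 0).hasDerivAt.continuousAt.tendsto
  exact hF.comp (tendsto_sqSubDerivSq_zero hU hU')

theorem tendsto_momentumIntegral_zero (hf : Continuous f) (hg : Continuous g)
    (hU : Tendsto U l (𝓝 0)) (hU' : Tendsto (deriv U) l (𝓝 0))
    (hU'' : Tendsto (deriv (deriv U)) l (𝓝 0)) :
    Tendsto (momentumIntegral f g c U) l (𝓝 0) := by
  have hW := tendsto_sqSubDerivSq_zero hU hU'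
  have hm : Tendsto (momentum U) l (𝓝 (0 - 0)) := hU.sub hU''
  have hflux : Tendsto (momentumFlux f g c U) l (𝓝 ((0 - 0) * (0 * f 0 + g 0 - c))) :=
    hm.mul (((hU.mul ((hf.tendsto 0).comp hW)).add ((hg.tendsto 0).comp hW)).sub_const c)
  have hP : Tendsto (momentumIntegral f g c U) l (𝓝 (0 / 2 + (0 - 0) * (0 * f 0 + g 0 - c))) :=
    ((tendsto_integral_sqSubDerivSq_zero hf hU hU').div_const 2).add hflux
  simpa using hP

theorem tendsto_energyIntegral_zero (hf : Continuous f) (hg : Continuous g)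
    (hU : Tendsto U l (𝓝 0)) (hU' : Tendsto (deriv U) l (𝓝 0)) :
    Tendsto (energyIntegral f g c U) l (𝓝 0) := by
  have hE : Tendsto (energyIntegral f g c U) l (𝓝 (0 * 0 + 0 - c * 0)) :=
    ((hU.mul (tendsto_integral_sqSubDerivSq_zero hf hU hU')).add
      (tendsto_integral_sqSubDerivSq_zero hg hU hU')).sub
      ((tendsto_sqSubDerivSq_zero hU hU').const_mul c)
  simpa using hE

theorem IsTravellingWave.momentumIntegral_eq_zero (hwave : IsTravellingWave f g c U)
    (hf : Continuous f) (hg : Continuous g) (hU : Differentiable ℝ U)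
    (hU' : Differentiable ℝ (deriv U)) (hU_top : Tendsto U atTop (𝓝 0))
    (hU'_top : Tendsto (deriv U) atTop (𝓝 0)) (ξ : ℝ) : momentumIntegral f g c U ξ = 0 := by
  -- `P` is constant, so it is enough that `U''` tends to `0` along some filter finer than `atTop`.
  obtain ⟨l, hl, hU''_l⟩ := mapClusterPt_iff_ultrafilter.1
    (mapClusterPt_deriv_zero_of_tendsto_atTop hU' hU'_top)
  exact eq_of_hasDerivAt_zero_of_tendsto
    (fun s ↦ hwave.hasDerivAt_momentumIntegral hf (hU s) (hU' s))
    (tendsto_momentumIntegral_zero hf hg (hU_top.mono_left hl) (hU'_top.mono_left hl) hU''_l) ξ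

theorem IsTravellingWave.energyIntegral_eq_zero (hwave : IsTravellingWave f g c U)
    (hf : Continuous f) (hg : Continuous g) (hU : Differentiable ℝ U)
    (hU' : Differentiable ℝ (deriv U)) (hU_top : Tendsto U atTop (𝓝 0))
    (hU'_top : Tendsto (deriv U) atTop (𝓝 0)) (ξ : ℝ) : energyIntegral f g c U ξ = 0 := by
  refine eq_of_hasDerivAt_zero_of_tendsto (fun s ↦ ?_)
    (tendsto_energyIntegral_zero hf hg hU_top hU'_top) ξ
  simpa [hwave.momentumIntegral_eq_zero hf hg hU hU' hU_top hU'_top s] using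
    hasDerivAt_energyIntegral (c := c) hf hg (hU s) (hU' s)

theorem energyIntegral_of_deriv_eq_zero (hξ : deriv U ξ = 0) :
    energyIntegral f g c U ξ =
      U ξ * (∫ s in (0 : ℝ)..U ξ ^ 2, f s) + (∫ s in (0 : ℝ)..U ξ ^ 2, g s) - c * U ξ ^ 2 := by
  simp [energyIntegral, sqSubDerivSq, hξ]

end FirstIntegrals

theorem no_smooth_solitary_waves_general {f g U : ℝ → ℝ} {c : ℝ}
    (hf : Continuous f) (hg : Continuous g)
    (hspeed : ∀ a : ℝ, a ≠ 0 →
      a * (∫ s in (0 : ℝ)..a ^ 2, f s) + (∫ s in (0 : ℝ)..a ^ 2, g s) ≠ c * a ^ 2)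
    (hU : Differentiable ℝ U) (hU' : Differentiable ℝ (deriv U))
    (hwave : IsTravellingWave f g c U)
    (hU_top : Tendsto U atTop (𝓝 0)) (hU_bot : Tendsto U atBot (𝓝 0))
    (hU'_top : Tendsto (deriv U) atTop (𝓝 0)) (ξ : ℝ) : U ξ = 0 := by
  by_contra hξ
  have hU_cocompact : Tendsto U (cocompact ℝ) (𝓝 0) := by
    rw [cocompact_eq_atBot_atTop]
    exact hU_bot.sup hU_top
  obtain ⟨x, hx, hextr⟩ :=
    exists_ne_zero_isLocalExtr_of_tendsto_cocompact hU.continuous hU_cocompact hξ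
  have hE := hwave.energyIntegral_eq_zero hf hg hU hU' hU_top hU'_top x
  rw [energyIntegral_of_deriv_eq_zero hextr.deriv_eq_zero] at hE
  exact hspeed (U x) hx (sub_eq_zero.1 hE)

/-- nonexistence of nontrivial smooth solitary travelling waves for
the Hamiltonian multi-peakon family when `a F1(a²) + G1(a²) ≠ c a²` for all `a ≠ 0`. -/
theorem no_smooth_solitary_waves
    (f1 g1 : ℝ → ℝ) (hf1 : ContDiff ℝ (⊤ : ℕ∞) f1) (hg1 : ContDiff ℝ (⊤ : ℕ∞) g1)
    (F1 G1 : ℝ → ℝ)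
    (hF1 : ∀ y : ℝ, F1 y = ∫ s in (0:ℝ)..y, f1 s)
    (hG1 : ∀ y : ℝ, G1 y = ∫ s in (0:ℝ)..y, g1 s)
    (c : ℝ)
    (hspeed : ∀ a : ℝ, a ≠ 0 → a * F1 (a^2) + G1 (a^2) ≠ c * a^2)
    (U : ℝ → ℝ) (hU : ContDiff ℝ (⊤ : ℕ∞) U)
    (hode : ∀ ξ : ℝ,
      -c * (deriv U ξ - deriv (deriv (deriv U)) ξ)
        + deriv U ξ * (U ξ - deriv (deriv U) ξ) * f1 ((U ξ)^2 - (deriv U ξ)^2)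
        + deriv (fun s =>
            (U s - deriv (deriv U) s)
              * (U s * f1 ((U s)^2 - (deriv U s)^2)
                  + g1 ((U s)^2 - (deriv U s)^2))) ξ = 0)
    (hUtop : Tendsto U atTop (nhds 0)) (hUbot : Tendsto U atBot (nhds 0))
    (hU'top : Tendsto (deriv U) atTop (nhds 0))
    (hU'bot : Tendsto (deriv U) atBot (nhds 0))
    (hU''top : Tendsto (deriv (deriv U)) atTop (nhds 0))
    (hU''bot : Tendsto (deriv (deriv U)) atBot (nhds 0)) :
    ∀ ξ : ℝ, U ξ = 0 := by
  have hU' := (contDiff_infty_iff_deriv.1 hU).2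
  have hU'' := (contDiff_infty_iff_deriv.1 hU').2
  have differentiable {h : ℝ → ℝ} (hh : ContDiff ℝ (⊤ : ℕ∞) h) : Differentiable ℝ h :=
    hh.differentiable (by simp)
  have hwave := isTravellingWave_of_ode (differentiable hf1) (differentiable hg1)
    (differentiable hU) (differentiable hU') (differentiable hU'') hode
  exact no_smooth_solitary_waves_general hf1.continuous hg1.continuous
    (by simpa only [hF1, hG1] using hspeed) (differentiable hU) (differentiable hU') hwave
    hUtop hUbot hU'top
end
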